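/- For the elephant random walk with memory parameter p ∈ [0, 1) on a Cayley graph that is the d-regular tree T_d (d ≥ 3): if p ≤ p_d there exists C > 0 such that E|Ξ_n|^2 ≤ C · r_n^{−2} · log n for all n ≥ 2, and if p > p_d there exists C > 0 such that E|Ξ_n|^2 ≤ C · r_n^{−2} for all n ≥ 1, where r_n = n^{1/2} if p < p_d, r_n = (n / log n)^{1/2} if p = p_d, and r_n = n^{d(1−p)/(d−1)} if p > p_d, with p_d = (d + 1)/(2d). -/

import Mathlib

open MeasureTheory ProbabilityTheory Filter

noncomputable section

/-- The Cayley graph of a group with respect to a finite set of generators. -/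
def cayleyGraph {G : Type*} [Group G] (S : Finset G) : SimpleGraph G where
  Adj x y := x ≠ y ∧ (y * x⁻¹ ∈ S ∨ x * y⁻¹ ∈ S)
  symm := by
    constructor
    rintro x y ⟨h1, h2⟩
    refine ⟨h1.symm, ?_⟩
    rcases h2 with h | h
    · exact Or.inr h
    · exact Or.inl h
  loopless := ⟨fun x h => h.1 rfl⟩

/-- The elephant random walk (ERW) with memory parameter `p` on the Cayley graph of a
group `G` with respect to a symmetric generating set `S` of cardinality `d`, not
containing the identity, whose Cayley graph is a tree (hence the `d`-regular tree
`T_d`).  The steps are `g 1, g 2, …` (the value of `g 0` is irrelevant).  The law of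
the process is characterised by: `g 1` is uniform on `S`, and, conditionally on the
first `n` steps being `s 1, …, s n`, the next step `g (n+1)` equals `a ∈ S` with
probability `p * N/n + ((1-p)/(d-1)) * (n-N)/n`, where `N = #{1 ≤ k ≤ n : s k = a}`;
this is precisely the probability that the walker, recalling a uniform past epoch
`D ∈ {1, …, n}`, repeats `g D` with probability `p` and takes any given other step
with probability `(1-p)/(d-1)`. -/
structure ERW (G : Type*) [Group G] [DecidableEq G] (d : ℕ) (p : ℝ)
    (Ω : Type*) [MeasurableSpace Ω] (P : Measure Ω) where
  S : Finset G
  card_S : S.card = d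
  symm_S : ∀ s ∈ S, s⁻¹ ∈ S
  one_not_mem : (1 : G) ∉ S
  tree : (cayleyGraph S).IsTree
  g : ℕ → Ω → G
  meas_g : ∀ n a, MeasurableSet {ω | g n ω = a}
  mem_S : ∀ n, 1 ≤ n → ∀ ω, g n ω ∈ S
  init : ∀ a ∈ S, (P {ω | g 1 ω = a}).toReal = 1 / d
  update : ∀ n, 1 ≤ n → ∀ s : ℕ → G, ∀ a ∈ S,
    (P ({ω | ∀ k ∈ Finset.Icc 1 n, g k ω = s k} ∩ {ω | g (n + 1) ω = a})).toReal
      = (p * ((((Finset.Icc 1 n).filter fun k => s k = a).card : ℝ) / n)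
          + (1 - p) / ((d : ℝ) - 1)
            * (((n : ℝ) - (((Finset.Icc 1 n).filter fun k => s k = a).card : ℝ)) / n))
        * (P {ω | ∀ k ∈ Finset.Icc 1 n, g k ω = s k}).toReal

namespace ERW

variable {G : Type*} [Group G] [DecidableEq G] {d : ℕ} {p : ℝ}
  {Ω : Type*} [MeasurableSpace Ω] {P : Measure Ω}

/-- The position `w n = g n ⋯ g 1` of the walk at time `n`. -/
def pos (E : ERW G d p Ω P) : ℕ → Ω → G
  | 0 => fun _ => 1
  | n + 1 => fun ω => E.g (n + 1) ω * E.pos n ω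

/-- `Δ n`: the (word-metric) distance of the walker from the root at time `n`. -/
def dist (E : ERW G d p Ω P) (n : ℕ) (ω : Ω) : ℕ :=
  (cayleyGraph E.S).dist 1 (E.pos n ω)

/-- `N n a`: the number of `a`-steps taken by time `n`. -/
def count (E : ERW G d p Ω P) (a : G) (n : ℕ) (ω : Ω) : ℕ :=
  ((Finset.Icc 1 n).filter fun k => E.g k ω = a).card

/-- `γ n`: the unique step decreasing the distance to the root by 1
(a junk value if the walker is at the root). -/
def gammaStep (E : ERW G d p Ω P) (n : ℕ) (ω : Ω) : G :=
  @Classical.epsilon G ⟨1⟩ fun s =>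
    s ∈ E.S ∧ (cayleyGraph E.S).dist 1 (s * E.pos n ω) + 1 = E.dist n ω

/-- `ℓ n = N n (γ n)` if the walker is away from the root, and `0` otherwise. -/
def ell (E : ERW G d p Ω P) (n : ℕ) (ω : Ω) : ℕ :=
  if E.pos n ω = 1 then 0 else E.count (E.gammaStep n ω) n ω

/-- `Ξ n = (1/n) ∑_{k=0}^{n-1} (ℓ k / k - 1(Δ k > 0)/d)` (with the convention
`ℓ 0 / 0 = 0`, automatic since division by zero yields zero). -/
def Xi (E : ERW G d p Ω P) (n : ℕ) (ω : Ω) : ℝ :=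
  (1 / n) * ∑ k ∈ Finset.range n,
    ((E.ell k ω : ℝ) / k - (if 0 < E.dist k ω then 1 else 0) / d)

/-- The natural filtration `F n` generated by the steps up to time `n`. -/
def filt (E : ERW G d p Ω P) (n : ℕ) : MeasurableSpace Ω :=
  ⨆ k ∈ Finset.Icc 1 n, MeasurableSpace.comap (E.g k) ⊤

/-- `G n = E[Δ (n+1) - Δ n | F n]`. -/
def drift (E : ERW G d p Ω P) (n : ℕ) : Ω → ℝ :=
  P[fun ω => ((E.dist (n + 1) ω : ℝ) - (E.dist n ω : ℝ)) | E.filt n]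

/-- The martingale differences `Y k = Δ k - Δ (k-1) - G (k-1)`. -/
def mdiff (E : ERW G d p Ω P) (k : ℕ) (ω : Ω) : ℝ :=
  (E.dist k ω : ℝ) - (E.dist (k - 1) ω : ℝ) - E.drift (k - 1) ω

/-- The martingale `M n = ∑_{k=1}^n Y k`. -/
def mart (E : ERW G d p Ω P) (n : ℕ) (ω : Ω) : ℝ :=
  ∑ k ∈ Finset.Icc 1 n, E.mdiff k ω

end ERW

/-- The rate `r n`: `√n` in the subcritical regime `p < p_d = (d+1)/(2d)`,
`√(n / log n)` in the critical regime `p = p_d`, and `n ^ (d(1-p)/(d-1))` in the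
supercritical regime `p > p_d`. -/
def rate (p : ℝ) (d : ℕ) (n : ℕ) : ℝ :=
  if p < ((d : ℝ) + 1) / (2 * d) then Real.sqrt n
  else if p = ((d : ℝ) + 1) / (2 * d) then Real.sqrt ((n : ℝ) / Real.log n)
  else (n : ℝ) ^ ((d : ℝ) * (1 - p) / ((d : ℝ) - 1))


namespace ERW

variable {G : Type*} [Group G] [DecidableEq G] {d : ℕ} {p : ℝ}
  {Ω : Type*} [MeasurableSpace Ω] {P : Measure Ω}

theorem measurable_indic (E : ERW G d p Ω P) (a : G) (k : ℕ) :
    Measurable fun ω => if E.g k ω = a then (1 : ℝ) else 0 :=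
  Measurable.ite (E.meas_g k a) measurable_const measurable_const

theorem count_eq_sum (E : ERW G d p Ω P) (a : G) (n : ℕ) (ω : Ω) :
    (E.count a n ω : ℝ) = ∑ k ∈ Finset.Icc 1 n, if E.g k ω = a then (1 : ℝ) else 0 := by
  simp [count]

theorem measurable_count (E : ERW G d p Ω P) (a : G) (n : ℕ) :
    Measurable fun ω => (E.count a n ω : ℝ) := by
  simp only [count_eq_sum]
  exact Finset.measurable_sum _ fun k _ => E.measurable_indic a k

theorem count_le (E : ERW G d p Ω P) (a : G) (n : ℕ) (ω : Ω) :
    (E.count a n ω : ℝ) ≤ n := by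
  have := Finset.card_filter_le (Finset.Icc 1 n) (fun k => E.g k ω = a)
  simp only [Nat.card_Icc, Nat.add_sub_cancel] at this
  exact_mod_cast this

/-- centred count -/
def cc (E : ERW G d p Ω P) (a : G) (n : ℕ) (ω : Ω) : ℝ := (E.count a n ω : ℝ) - n / d

theorem measurable_cc (E : ERW G d p Ω P) (a : G) (n : ℕ) : Measurable (E.cc a n) :=
  (E.measurable_count a n).sub_const _

theorem abs_cc_le (E : ERW G d p Ω P) (hd : 3 ≤ d) (a : G) (n : ℕ) (ω : Ω) :
    |E.cc a n ω| ≤ n := by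
  have h1 := E.count_le a n ω
  have h2 : (0 : ℝ) ≤ E.count a n ω := by positivity
  have h3 : (n : ℝ) / d ≤ n := div_le_self (by positivity) (by exact_mod_cast (by omega : 1 ≤ d))
  have h4 : (0 : ℝ) ≤ (n : ℝ) / d := by positivity
  rw [abs_le, cc]
  constructor <;> linarith

theorem integrable_bdd [IsProbabilityMeasure P] {f : Ω → ℝ} (hf : Measurable f) (C : ℝ)
    (h : ∀ ω, |f ω| ≤ C) : Integrable f P :=
  Integrable.of_bound hf.aestronglyMeasurable C (Eventually.of_forall h)

theorem cross [IsProbabilityMeasure P] (E : ERW G d p Ω P) (hd : 3 ≤ d) (n : ℕ) (hn : 1 ≤ n)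
    (a : G) (ha : a ∈ E.S) :
    ∫ ω, E.cc a n ω * (if E.g (n + 1) ω = a then 1 else 0) ∂P
      = ∫ ω, E.cc a n ω * ((p * d - 1) / (d - 1) / n * E.cc a n ω + 1 / d) ∂P := by
  classical
  let st : (Fin n → E.S) → ℕ → G := fun t k => if h : k - 1 < n then (t ⟨k - 1, h⟩ : G) else 1
  let A : (Fin n → E.S) → Set Ω := fun t => {ω | ∀ k ∈ Finset.Icc 1 n, E.g k ω = st t k}
  have hA : ∀ t, MeasurableSet (A t) := by
    intro t
    have : A t = ⋂ k ∈ Finset.Icc 1 n, {ω | E.g k ω = st t k} := by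
      ext ω; simp [A]
    rw [this]
    exact Finset.measurableSet_biInter _ fun k _ => E.meas_g k _
  have hU : (⋃ t, A t) = Set.univ := by
    rw [Set.eq_univ_iff_forall]
    intro ω
    rw [Set.mem_iUnion]
    refine ⟨fun i => ⟨E.g (i + 1) ω, E.mem_S _ (by omega) ω⟩, ?_⟩
    intro k hk
    rw [Finset.mem_Icc] at hk
    have h1 : k - 1 < n := by omega
    simp only [st, h1, dif_pos]
    rw [Nat.sub_add_cancel hk.1]
  have hD : Pairwise (Function.onFun Disjoint A) := by
    intro t t' htt
    rw [Function.onFun, Set.disjoint_left]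
    intro ω h1 h2
    apply htt
    funext i
    have e1 := h1 (i + 1) (by simp only [Finset.mem_Icc]; omega)
    have e2 := h2 (i + 1) (by simp only [Finset.mem_Icc]; omega)
    rw [e1] at e2
    simpa [st] using e2
  have m1 : Measurable fun ω => E.cc a n ω * (if E.g (n + 1) ω = a then (1 : ℝ) else 0) :=
    (E.measurable_cc a n).mul (E.measurable_indic a _)
  have m2 : Measurable fun ω =>
      E.cc a n ω * ((p * d - 1) / (d - 1) / n * E.cc a n ω + 1 / d) :=
    (E.measurable_cc a n).mul (((E.measurable_cc a n).const_mul _).add_const _)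
  have i1 : Integrable (fun ω => E.cc a n ω * (if E.g (n + 1) ω = a then (1 : ℝ) else 0)) P := by
    refine integrable_bdd m1 n fun ω => ?_
    have := E.abs_cc_le hd a n ω
    split_ifs <;> simp [this]
  have i2 : Integrable (fun ω =>
      E.cc a n ω * ((p * d - 1) / (d - 1) / n * E.cc a n ω + 1 / d)) P := by
    refine integrable_bdd m2 (n * (|(p * d - 1) / (d - 1) / n| * n + |(1 : ℝ) / d|)) fun ω => ?_
    have := E.abs_cc_le hd a n ω
    rw [abs_mul]
    refine mul_le_mul this ((abs_add_le _ _).trans ?_) (abs_nonneg _) (by positivity)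
    rw [abs_mul]
    gcongr
  rw [← setIntegral_univ (μ := P), ← setIntegral_univ (μ := P), ← hU,
    integral_iUnion_fintype hA hD fun t => i1.integrableOn,
    integral_iUnion_fintype hA hD fun t => i2.integrableOn]
  refine Finset.sum_congr rfl fun t _ => ?_
  set N : ℝ := (((Finset.Icc 1 n).filter fun k => st t k = a).card : ℝ) with hN
  have hc : ∀ ω ∈ A t, E.cc a n ω = N - n / d := by
    intro ω hω
    simp only [cc, count, hN]
    congr 3
    refine Finset.filter_congr fun k hk => ?_
    rw [hω k hk]
  have e1 : ∫ ω in A t, E.cc a n ω * (if E.g (n + 1) ω = a then (1 : ℝ) else 0) ∂P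
      = (N - n / d) * (P (A t ∩ {ω | E.g (n + 1) ω = a})).toReal := by
    have : ∫ ω in A t, E.cc a n ω * (if E.g (n + 1) ω = a then (1 : ℝ) else 0) ∂P
        = ∫ ω in A t, ({ω | E.g (n + 1) ω = a}.indicator fun _ => (N - n / d)) ω ∂P := by
      refine setIntegral_congr_fun (hA t) fun ω hω => ?_
      simp only [hc ω hω, Set.indicator, Set.mem_setOf_eq]
      split_ifs <;> simp
    rw [this, setIntegral_indicator (E.meas_g _ _), setIntegral_const, smul_eq_mul, mul_comm]
    rfl
  have e2 : ∫ ω in A t, E.cc a n ω * ((p * d - 1) / (d - 1) / n * E.cc a n ω + 1 / d) ∂P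
      = (N - n / d) * ((p * d - 1) / (d - 1) / n * (N - n / d) + 1 / d) * (P (A t)).toReal := by
    rw [setIntegral_congr_fun (g := fun _ =>
      (N - n / d) * ((p * d - 1) / (d - 1) / n * (N - n / d) + 1 / d)) (hA t)
      fun ω hω => by simp only [hc ω hω]]
    rw [setIntegral_const, smul_eq_mul, mul_comm]
    rfl
  rw [e1, e2, E.update n hn (st t) a ha, ← hN, ← mul_assoc]
  congr 2
  have hd' : (d : ℝ) ≠ 0 := by positivity
  have hd3 : (3 : ℝ) ≤ d := by exact_mod_cast hd
  have hd1 : (d : ℝ) - 1 ≠ 0 := by linarith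
  have hn' : (n : ℝ) ≠ 0 := by positivity
  field_simp
  ring

/-- second moment of the centred count -/
def v (E : ERW G d p Ω P) (a : G) (n : ℕ) : ℝ := ∫ ω, E.cc a n ω ^ 2 ∂P

theorem integrable_cc_sq [IsProbabilityMeasure P] (E : ERW G d p Ω P) (hd : 3 ≤ d) (n : ℕ)
    (a : G) : Integrable (fun ω => E.cc a n ω ^ 2) P := by
  refine integrable_bdd ((E.measurable_cc a n).pow_const 2) ((n : ℝ) ^ 2) fun ω => ?_
  rw [abs_pow]
  have := E.abs_cc_le hd a n ω
  gcongr

theorem v_one [IsProbabilityMeasure P] (E : ERW G d p Ω P) (hd : 3 ≤ d) (a : G) :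
    E.v a 1 ≤ 1 := by
  have : E.v a 1 ≤ ∫ _ω, (1 : ℝ) ∂P := by
    refine integral_mono (E.integrable_cc_sq hd 1 a) (integrable_const _) fun ω => ?_
    have := E.abs_cc_le hd a 1 ω
    simp only [Nat.cast_one] at this
    exact (sq_le_one_iff_abs_le_one _).2 this
  simpa using this

theorem v_succ [IsProbabilityMeasure P] (E : ERW G d p Ω P) (hd : 3 ≤ d) (n : ℕ) (hn : 1 ≤ n)
    (a : G) (ha : a ∈ E.S) :
    E.v a (n + 1) ≤ (1 + 2 * ((p * d - 1) / (d - 1)) / n) * E.v a n + 1 := by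
  have hcr := E.cross hd n hn a ha
  have ic : Integrable (E.cc a n) P :=
    integrable_bdd (E.measurable_cc a n) n (E.abs_cc_le hd a n)
  have isq := E.integrable_cc_sq hd n a
  have i1 : Integrable (fun ω => E.cc a n ω * (if E.g (n + 1) ω = a then (1 : ℝ) else 0)) P := by
    refine integrable_bdd ((E.measurable_cc a n).mul (E.measurable_indic a _)) n fun ω => ?_
    have := E.abs_cc_le hd a n ω
    split_ifs <;> simp [this]
  have hr : ∫ ω, E.cc a n ω * ((p * d - 1) / (d - 1) / n * E.cc a n ω + 1 / d) ∂P
      = (p * d - 1) / (d - 1) / n * E.v a n + 1 / d * ∫ ω, E.cc a n ω ∂P := by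
    rw [v, ← integral_const_mul, ← integral_const_mul,
      ← integral_add (isq.const_mul _) (ic.const_mul _)]
    congr 1; funext ω; ring
  have h0 : E.v a (n + 1) ≤ ∫ ω, (E.cc a n ω ^ 2
      + 2 * (E.cc a n ω * (if E.g (n + 1) ω = a then (1 : ℝ) else 0))
      - 2 / d * E.cc a n ω + 1) ∂P := by
    refine integral_mono (E.integrable_cc_sq hd _ a)
      (((isq.add (i1.const_mul 2)).sub (ic.const_mul _)).add (integrable_const _)) fun ω => ?_
    have e : E.cc a (n + 1) ω = E.cc a n ω + ((if E.g (n + 1) ω = a then (1 : ℝ) else 0) - 1 / d) := by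
      simp only [cc, count_eq_sum]
      rw [Finset.sum_Icc_succ_top (by omega)]
      push_cast
      ring
    have hdp : (0 : ℝ) < 1 / d := by positivity
    have hd1 : (1 : ℝ) / d ≤ 1 := by
      rw [div_le_one (by positivity)]; exact_mod_cast (by omega : 1 ≤ d)
    have hsq : ((if E.g (n + 1) ω = a then (1 : ℝ) else 0) - 1 / d) ^ 2 ≤ 1 := by
      rw [sq_le_one_iff_abs_le_one, abs_le]
      split_ifs <;> constructor <;> linarith
    simp only [e]
    have : (2 : ℝ) / d = 2 * (1 / d) := by ring
    rw [this]
    nlinarith [hsq]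
  have h1 : ∫ ω, (E.cc a n ω ^ 2
      + 2 * (E.cc a n ω * (if E.g (n + 1) ω = a then (1 : ℝ) else 0))
      - 2 / d * E.cc a n ω + 1) ∂P = E.v a n
      + 2 * ∫ ω, (E.cc a n ω * (if E.g (n + 1) ω = a then (1 : ℝ) else 0)) ∂P
      - 2 / d * ∫ ω, E.cc a n ω ∂P + 1 := by
    have j2 : Integrable (fun ω => E.cc a n ω ^ 2
        + 2 * (E.cc a n ω * (if E.g (n + 1) ω = a then (1 : ℝ) else 0))) P :=
      isq.add (i1.const_mul 2)
    have j3 : Integrable (fun ω => E.cc a n ω ^ 2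
        + 2 * (E.cc a n ω * (if E.g (n + 1) ω = a then (1 : ℝ) else 0))
        - 2 / d * E.cc a n ω) P := j2.sub (ic.const_mul _)
    rw [integral_add j3 (integrable_const _), integral_sub j2 (ic.const_mul _),
      integral_add isq (i1.const_mul 2), integral_const_mul, integral_const_mul]
    simp [v]
  rw [h1, hcr, hr] at h0
  refine h0.trans (le_of_eq ?_)
  ring

theorem dist_pos_iff (E : ERW G d p Ω P) (n : ℕ) (ω : Ω) :
    0 < E.dist n ω ↔ E.pos n ω ≠ 1 := by
  have h := E.tree.connected
  rw [dist]
  constructor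
  · intro h1 h2
    rw [h2, SimpleGraph.dist_self] at h1
    exact lt_irrefl _ h1
  · intro h1
    exact h.pos_dist_of_ne (Ne.symm h1)

theorem gamma_mem (E : ERW G d p Ω P) (n : ℕ) (ω : Ω) (h : E.pos n ω ≠ 1) :
    E.gammaStep n ω ∈ E.S := by
  have hex : ∃ s, s ∈ E.S ∧ (cayleyGraph E.S).dist 1 (s * E.pos n ω) + 1 = E.dist n ω := by
    have hc := E.tree.connected
    obtain ⟨w, hw⟩ := hc.exists_walk_length_eq_dist (E.pos n ω) 1
    have hnil : ¬ w.Nil := fun hw' => h hw'.eq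
    obtain ⟨y, hadj, q, rfl⟩ := SimpleGraph.Walk.not_nil_iff.1 hnil
    · have hdd : E.dist n ω = q.length + 1 := by
        rw [dist, SimpleGraph.dist_comm, ← hw]; rfl
      have hS : y * (E.pos n ω)⁻¹ ∈ E.S := by
        rcases hadj.2 with h | h
        · exact h
        · simpa using E.symm_S _ h
      refine ⟨_, hS, ?_⟩
      rw [inv_mul_cancel_right]
      have h1 : (cayleyGraph E.S).dist 1 y ≤ q.length := by
        rw [SimpleGraph.dist_comm]; exact SimpleGraph.dist_le q
      have h2 : E.dist n ω ≤ (cayleyGraph E.S).dist 1 y + (cayleyGraph E.S).dist y (E.pos n ω) :=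
        hc.dist_triangle
      have h3 : (cayleyGraph E.S).dist y (E.pos n ω) = 1 :=
        SimpleGraph.dist_eq_one_iff_adj.2 hadj.symm
      omega
  exact (Classical.epsilon_spec hex).1

theorem term_sq_le (E : ERW G d p Ω P) (k : ℕ) (ω : Ω) :
    ((E.ell k ω : ℝ) / k - (if 0 < E.dist k ω then 1 else 0) / d) ^ 2
      ≤ ∑ a ∈ E.S, E.cc a k ω ^ 2 / (k : ℝ) ^ 2 := by
  have hnn : ∀ a ∈ E.S, 0 ≤ E.cc a k ω ^ 2 / (k : ℝ) ^ 2 := fun a _ => by positivity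
  by_cases h : E.pos k ω = 1
  · have : ¬ 0 < E.dist k ω := by rw [dist_pos_iff]; simpa using h
    simp only [ell, h, if_true, this, if_false]
    simpa using Finset.sum_nonneg hnn
  · have hk : (k : ℝ) ≠ 0 := by
      rintro hk
      have : k = 0 := by exact_mod_cast hk
      subst this
      exact h rfl
    have h' := (E.dist_pos_iff k ω).2 h
    simp only [ell, h, if_false, h', if_true]
    refine le_trans (le_of_eq ?_) (Finset.single_le_sum hnn (E.gamma_mem k ω h))
    rw [cc, ← div_pow]
    congr 1
    field_simp

theorem Xi_le [IsProbabilityMeasure P] (E : ERW G d p Ω P) (hd : 3 ≤ d) (u : ℕ → ℝ)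
    (hu : ∀ a ∈ E.S, ∀ k, 1 ≤ k → E.v a k ≤ u k) (n : ℕ) :
    ∫ ω, |E.Xi n ω| ^ 2 ∂P ≤ d / n * ∑ k ∈ Finset.Ico 1 n, u k / (k : ℝ) ^ 2 := by
  have hint : ∀ k, Integrable (fun ω => ∑ a ∈ E.S, E.cc a k ω ^ 2 / (k : ℝ) ^ 2) P := fun k =>
    integrable_finset_sum _ fun a _ => (E.integrable_cc_sq hd k a).div_const _
  have h1 : ∫ ω, |E.Xi n ω| ^ 2 ∂P
      ≤ ∫ ω, (1 / (n : ℝ)) * ∑ k ∈ Finset.range n, ∑ a ∈ E.S, E.cc a k ω ^ 2 / (k : ℝ) ^ 2 ∂P := by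
    refine integral_mono_of_nonneg (Eventually.of_forall fun ω => by positivity)
      ((integrable_finset_sum _ fun k _ => hint k).const_mul _) (Eventually.of_forall fun ω => ?_)
    simp only [sq_abs, Xi]
    rcases Nat.eq_zero_or_pos n with rfl | hn
    · simp
    have hn' : (0 : ℝ) < n := by exact_mod_cast hn
    have cs := sq_sum_le_card_mul_sum_sq (s := Finset.range n)
      (f := fun k => (E.ell k ω : ℝ) / k - (if 0 < E.dist k ω then 1 else 0) / d)
    rw [Finset.card_range] at cs
    have hs := Finset.sum_le_sum fun k (_ : k ∈ Finset.range n) => E.term_sq_le k ω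
    rw [mul_pow]
    calc _ ≤ (1 / (n : ℝ)) ^ 2 * (n * ∑ k ∈ Finset.range n, ∑ a ∈ E.S, E.cc a k ω ^ 2 / (k : ℝ) ^ 2) := by
          gcongr
          exact cs.trans (by gcongr)
      _ = _ := by field_simp
  refine h1.trans ?_
  rw [integral_const_mul, integral_finset_sum _ fun k _ => hint k]
  have h2 : ∀ k, ∫ ω, ∑ a ∈ E.S, E.cc a k ω ^ 2 / (k : ℝ) ^ 2 ∂P = ∑ a ∈ E.S, E.v a k / (k : ℝ) ^ 2 := by
    intro k
    rw [integral_finset_sum _ fun a _ => (E.integrable_cc_sq hd k a).div_const _]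
    exact Finset.sum_congr rfl fun a _ => integral_div _ _
  simp only [h2]
  have h3 : ∑ k ∈ Finset.range n, ∑ a ∈ E.S, E.v a k / (k : ℝ) ^ 2
      = ∑ k ∈ Finset.Ico 1 n, ∑ a ∈ E.S, E.v a k / (k : ℝ) ^ 2 := by
    symm
    refine Finset.sum_subset (fun k hk => by simp at hk ⊢; omega) fun k hk hk' => ?_
    have : k = 0 := by simp at hk hk'; omega
    subst this
    simp
  rw [h3]
  have h4 : ∑ k ∈ Finset.Ico 1 n, ∑ a ∈ E.S, E.v a k / (k : ℝ) ^ 2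
      ≤ ∑ k ∈ Finset.Ico 1 n, d * (u k / (k : ℝ) ^ 2) := by
    refine Finset.sum_le_sum fun k hk => ?_
    rw [Finset.mem_Ico] at hk
    calc _ ≤ ∑ a ∈ E.S, u k / (k : ℝ) ^ 2 := by
          refine Finset.sum_le_sum fun a ha => ?_
          have := hu a ha k hk.1
          gcongr
      _ = _ := by rw [Finset.sum_const, E.card_S, nsmul_eq_mul]
  calc _ ≤ (1 / (n : ℝ)) * ∑ k ∈ Finset.Ico 1 n, d * (u k / (k : ℝ) ^ 2) := by gcongr
    _ = _ := by rw [← Finset.mul_sum]; ring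

end ERW

/-- harmonic sum as a real function -/
def hsum (n : ℕ) : ℝ := ∑ k ∈ Finset.Icc 1 n, (1 : ℝ) / k

theorem hsum_le (n : ℕ) (hn : 2 ≤ n) : hsum n ≤ 3 * Real.log n := by
  have h1 : hsum n = (harmonic n : ℝ) := by
    rw [harmonic_eq_sum_Icc, hsum]; push_cast; simp
  have h2 := harmonic_le_one_add_log n
  have h3 : Real.log 2 ≤ Real.log n := Real.log_le_log (by norm_num) (by exact_mod_cast hn)
  have h4 := Real.log_two_gt_d9
  rw [h1]; linarith

theorem hsum_mono {m n : ℕ} (h : m ≤ n) : hsum m ≤ hsum n :=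
  Finset.sum_le_sum_of_subset_of_nonneg (Finset.Icc_subset_Icc_right h)
    fun _ _ _ => by positivity

theorem sum_Ico_le_hsum (n : ℕ) : ∑ k ∈ Finset.Ico 1 n, (1 : ℝ) / k ≤ hsum n :=
  Finset.sum_le_sum_of_subset_of_nonneg Finset.Ico_subset_Icc_self fun _ _ _ => by positivity

theorem sum_rpow_le (s : ℝ) (hs : 0 < s) (hs1 : s ≤ 1) (n : ℕ) :
    ∑ k ∈ Finset.Icc 1 n, (k : ℝ) ^ (s - 1) ≤ (n : ℝ) ^ s / s := by
  induction n with
  | zero => simp [Real.zero_rpow hs.ne']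
  | succ n ih =>
    rw [Finset.sum_Icc_succ_top (by omega)]
    have hpos : (0 : ℝ) < (n + 1 : ℕ) := by positivity
    set m : ℝ := ((n + 1 : ℕ) : ℝ) with hm
    have hm1 : m = n + 1 := by simp [hm]
    have hb := rpow_one_add_le_one_add_mul_self (s := -(1 / m)) (p := s)
      (by rw [neg_le_neg_iff, div_le_one hpos, hm1]; linarith [Nat.cast_nonneg (α := ℝ) n]) hs.le hs1
    have e : (n : ℝ) = m * (1 + -(1 / m)) := by field_simp; rw [hm1]; ring
    have hnn : 0 ≤ 1 + -(1 / m) := by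
      have : 1 / m ≤ 1 := by rw [div_le_one hpos, hm1]; linarith [Nat.cast_nonneg (α := ℝ) n]
      linarith
    have e2 : (n : ℝ) ^ s ≤ m ^ s * (1 + s * -(1 / m)) := by
      rw [e, Real.mul_rpow hpos.le hnn]
      gcongr
    have e3 : m ^ (s - 1) = m ^ s / m := Real.rpow_sub_one hpos.ne' s
    rw [e3]
    calc _ ≤ (n : ℝ) ^ s / s + m ^ s / m := by gcongr
      _ ≤ (m ^ s * (1 + s * -(1 / m))) / s + m ^ s / m := by gcongr
      _ = _ := by field_simp; ring

/-- second moment of `Ξ n`: if `p ≤ p_d` then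
`E|Ξ n|^2 ≤ C * r n ^ (-2) * log n` for `n ≥ 2`, and if `p > p_d` then
`E|Ξ n|^2 ≤ C * r n ^ (-2)` for `n ≥ 1` (stated in product form). -/
theorem erw_Xi_second_moment
    {G : Type*} [Group G] [DecidableEq G] {Ω : Type*} [MeasurableSpace Ω]
    {P : Measure Ω} [IsProbabilityMeasure P]
    (d : ℕ) (hd : 3 ≤ d) (p : ℝ) (hp0 : 0 ≤ p) (hp1 : p < 1)
    (E : ERW G d p Ω P) :
    (p ≤ ((d : ℝ) + 1) / (2 * d) →
      ∃ C : ℝ, 0 < C ∧ ∀ n : ℕ, 2 ≤ n →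
        rate p d n ^ 2 * ∫ ω, |E.Xi n ω| ^ 2 ∂P ≤ C * Real.log n) ∧
    (((d : ℝ) + 1) / (2 * d) < p →
      ∃ C : ℝ, 0 < C ∧ ∀ n : ℕ, 1 ≤ n →
        rate p d n ^ 2 * ∫ ω, |E.Xi n ω| ^ 2 ∂P ≤ C) := by
  have hd3 : (3 : ℝ) ≤ d := by exact_mod_cast hd
  have hdpos : (0 : ℝ) < d := by linarith
  have hd1 : (0 : ℝ) < (d : ℝ) - 1 := by linarith
  set c : ℝ := (p * d - 1) / (d - 1) with hc
  have hcneg : -1 ≤ 2 * c := by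
    rw [hc, ← mul_div_assoc, le_div_iff₀ hd1]; nlinarith
  have hfac : ∀ n : ℕ, 1 ≤ n → 0 ≤ 1 + 2 * c / n := by
    intro n hn
    have hn' : (1 : ℝ) ≤ n := by exact_mod_cast hn
    have : -1 ≤ 2 * c / n := by rw [le_div_iff₀ (by linarith)]; linarith
    linarith
  have hrec : ∀ a ∈ E.S, ∀ u : ℕ → ℝ, 1 ≤ u 1 →
      (∀ n : ℕ, 1 ≤ n → (1 + 2 * c / n) * u n + 1 ≤ u (n + 1)) →
      ∀ k, 1 ≤ k → E.v a k ≤ u k := by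
    intro a ha u hu1 hu k hk
    induction k, hk using Nat.le_induction with
    | base => exact (E.v_one hd a).trans hu1
    | succ n hn ih =>
      refine (E.v_succ hd n hn a ha).trans (le_trans ?_ (hu n hn))
      have := hfac n hn
      gcongr
  constructor
  · intro hp
    rcases hp.lt_or_eq with hlt | heq
    · have hc1 : 0 < 1 - 2 * c := by
        rw [lt_div_iff₀ (by positivity)] at hlt
        have : 2 * c < 1 := by rw [hc, ← mul_div_assoc, div_lt_one hd1]; linarith
        linarith
      set K : ℝ := 1 + 1 / (1 - 2 * c) with hK
      have hKpos : 0 < K := by positivity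
      have hK1 : 1 ≤ K * (1 - 2 * c) := by
        rw [hK, add_mul, div_mul_cancel₀ _ hc1.ne']; linarith
      have hv : ∀ a ∈ E.S, ∀ k, 1 ≤ k → E.v a k ≤ K * k := fun a ha =>
        hrec a ha (fun k => K * k) (by
          have : 0 < 1 / (1 - 2 * c) := by positivity
          simp only [Nat.cast_one, mul_one]; linarith) (by
          intro n hn
          have hn' : (n : ℝ) ≠ 0 := by positivity
          push_cast
          have : (1 + 2 * c / n) * (K * n) = K * n + 2 * c * K := by field_simp
          rw [this]; nlinarith)
      refine ⟨d * K * 3, by positivity, fun n hn => ?_⟩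
      have hX := E.Xi_le hd (fun k => K * k) hv n
      have hn' : (0 : ℝ) < n := by positivity
      have hS : ∑ k ∈ Finset.Ico 1 n, K * (k : ℝ) / (k : ℝ) ^ 2 ≤ K * (3 * Real.log n) := by
        calc _ = K * ∑ k ∈ Finset.Ico 1 n, (1 : ℝ) / k := by
              rw [Finset.mul_sum]
              refine Finset.sum_congr rfl fun k hk => ?_
              rw [Finset.mem_Ico] at hk
              have : (k : ℝ) ≠ 0 := by have := hk.1; positivity
              field_simp
          _ ≤ _ := by
              gcongr
              exact (sum_Ico_le_hsum n).trans (hsum_le n hn)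
      rw [rate, if_pos hlt, Real.sq_sqrt hn'.le]
      calc _ ≤ (n : ℝ) * (d / n * (K * (3 * Real.log n))) := by
            gcongr
            exact hX.trans (by gcongr)
        _ = _ := by field_simp
    · have hc1 : 2 * c = 1 := by
        rw [hc, heq]; field_simp; ring
      have hv : ∀ a ∈ E.S, ∀ k, 1 ≤ k → E.v a k ≤ k * hsum k := fun a ha =>
        hrec a ha (fun k => k * hsum k) (by simp [hsum]) (by
          intro n hn
          have hn' : (n : ℝ) ≠ 0 := by positivity
          have : hsum (n + 1) = hsum n + 1 / (n + 1 : ℕ) := by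
            rw [hsum, Finset.sum_Icc_succ_top (by omega)]; rfl
          rw [this, hc1]
          push_cast
          have h1 : (n : ℝ) + 1 ≠ 0 := by positivity
          apply le_of_eq
          field_simp)
      refine ⟨d * 9, by positivity, fun n hn => ?_⟩
      have hX := E.Xi_le hd (fun k => k * hsum k) hv n
      have hn' : (0 : ℝ) < n := by positivity
      have hlog : 0 < Real.log n := Real.log_pos (by exact_mod_cast (by omega : 1 < n))
      have hS : ∑ k ∈ Finset.Ico 1 n, (k : ℝ) * hsum k / (k : ℝ) ^ 2
          ≤ (3 * Real.log n) * (3 * Real.log n) := by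
        calc _ ≤ ∑ k ∈ Finset.Ico 1 n, (3 * Real.log n) * ((1 : ℝ) / k) := by
              refine Finset.sum_le_sum fun k hk => ?_
              rw [Finset.mem_Ico] at hk
              have hk0 : (k : ℝ) ≠ 0 := by have := hk.1; positivity
              have e : (k : ℝ) * hsum k / (k : ℝ) ^ 2 = hsum k * (1 / k) := by field_simp
              rw [e]
              gcongr
              exact (hsum_mono hk.2.le).trans (hsum_le n hn)
          _ ≤ _ := by
              rw [← Finset.mul_sum]
              gcongr
              exact (sum_Ico_le_hsum n).trans (hsum_le n hn)
      rw [rate, if_neg (by rw [heq]; exact lt_irrefl _), if_pos heq, Real.sq_sqrt (by positivity)]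
      calc _ ≤ (n : ℝ) / Real.log n * (d / n * ((3 * Real.log n) * (3 * Real.log n))) := by
            gcongr
            exact hX.trans (by gcongr)
        _ = _ := by field_simp; ring
  · intro hp
    have hc1 : 1 < 2 * c := by
      rw [div_lt_iff₀ (by positivity)] at hp
      rw [hc, ← mul_div_assoc, lt_div_iff₀ hd1]; linarith
    have hc2 : c < 1 := by
      rw [hc, div_lt_one hd1]; nlinarith
    set s : ℝ := 2 * c - 1 with hs
    have hs0 : 0 < s := by linarith
    have hs1 : s ≤ 1 := by linarith
    have hβ : 2 * c = s + 1 := by linarith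
    set K : ℝ := 1 + 1 / s with hK
    have hKpos : 0 < K := by positivity
    have hv' : ∀ a ∈ E.S, ∀ k, 1 ≤ k → E.v a k ≤ K * (k : ℝ) ^ (s + 1) - 1 / s * k := fun a ha =>
      hrec a ha (fun k => K * (k : ℝ) ^ (s + 1) - 1 / s * k) (by simp [hK]) (by
        intro n hn
        have hn' : (0 : ℝ) < n := by positivity
        have hb := one_add_mul_self_le_rpow_one_add (s := 1 / (n : ℝ)) (p := s + 1)
          (by have : 0 < 1 / (n : ℝ) := by positivity
              linarith) (by linarith)
        have e : ((n + 1 : ℕ) : ℝ) ^ (s + 1) = (n : ℝ) ^ (s + 1) * (1 + 1 / (n : ℝ)) ^ (s + 1) := by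
          rw [← Real.mul_rpow hn'.le (by positivity)]
          congr 1; push_cast; field_simp
        rw [hβ, e]
        have h1 : K * ((n : ℝ) ^ (s + 1) * (1 + (s + 1) * (1 / n)))
            ≤ K * ((n : ℝ) ^ (s + 1) * (1 + 1 / (n : ℝ)) ^ (s + 1)) := by gcongr
        refine le_trans (le_of_eq ?_) (sub_le_sub_right h1 _)
        push_cast
        field_simp
        ring)
    have hv : ∀ a ∈ E.S, ∀ k, 1 ≤ k → E.v a k ≤ K * (k : ℝ) ^ (s + 1) := fun a ha k hk =>
      (hv' a ha k hk).trans (by have : 0 ≤ 1 / s * k := by positivity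
                                linarith)
    refine ⟨d * K / s, by positivity, fun n hn => ?_⟩
    have hX := E.Xi_le hd (fun k => K * (k : ℝ) ^ (s + 1)) hv n
    have hn' : (0 : ℝ) < n := by positivity
    have hS : ∑ k ∈ Finset.Ico 1 n, K * (k : ℝ) ^ (s + 1) / (k : ℝ) ^ 2 ≤ K * ((n : ℝ) ^ s / s) := by
      calc _ = K * ∑ k ∈ Finset.Ico 1 n, (k : ℝ) ^ (s - 1) := by
            rw [Finset.mul_sum]
            refine Finset.sum_congr rfl fun k hk => ?_
            rw [Finset.mem_Ico] at hk
            have : (0 : ℝ) < k := by have := hk.1; positivity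
            rw [mul_div_assoc, ← Real.rpow_natCast (k : ℝ) 2, ← Real.rpow_sub this]
            congr 2; push_cast; ring
        _ ≤ _ := by
            gcongr
            exact (Finset.sum_le_sum_of_subset_of_nonneg Finset.Ico_subset_Icc_self
              fun _ _ _ => by positivity).trans (sum_rpow_le s hs0 hs1 n)
    rw [rate, if_neg (not_lt.2 hp.le), if_neg hp.ne']
    have hr : ((n : ℝ) ^ ((d : ℝ) * (1 - p) / ((d : ℝ) - 1))) ^ 2 = n / (n : ℝ) ^ s := by
      rw [← Real.rpow_natCast, ← Real.rpow_mul hn'.le, ← Real.rpow_one_sub' hn'.le]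
      · congr 1
        rw [hs, hc]; push_cast; field_simp; ring
      · rw [hs]; intro h; linarith
    rw [hr]
    have hps : 0 < (n : ℝ) ^ s := by positivity
    calc _ ≤ (n : ℝ) / (n : ℝ) ^ s * (d / n * (K * ((n : ℝ) ^ s / s))) := by
          gcongr
          exact hX.trans (by gcongr)
      _ = _ := by field_simp

end
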